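/- For a strictly positive integer m, let A(m) denote the number of subsets S ⊆ {1,…,m} with ∑_{j∈S} j = ⌊m(m+1)/4⌋. Then A(m) = √(6/π) · 2^m / m^{3/2} · (1 + o(1)) as m → ∞; equivalently, A(m) · m^{3/2} / 2^m tends to √(6/π) as m → ∞. -/

import Mathlib

namespace MidRank
open Finset
noncomputable def P (m : ℕ) (t : ℝ) : ℝ := ∏ j ∈ Icc 1 m, Real.cos (j * t)

lemma int_exp (k : ℤ) : ∫ t in (-(Real.pi/2))..(Real.pi/2), Complex.exp ((2 * k * Complex.I) * (t:ℂ)) = if k = 0 then (Real.pi : ℂ) else 0 := by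
  split_ifs with h
  · subst h
    simp
  · have hc : (2 * (k:ℂ) * Complex.I) ≠ 0 := by simp [h]
    rw [integral_exp_mul_complex hc]
    rw [div_eq_zero_iff]; left
    rw [sub_eq_zero, Complex.exp_eq_exp_iff_exists_int]
    refine ⟨k, ?_⟩
    push_cast; ring

lemma term_eq (j : ℕ) (t : ℝ) : 1 + Complex.exp ((2 * j * Complex.I) * t) = 2 * (Real.cos (j * t) : ℂ) * Complex.exp (j * Complex.I * t) := by
  push_cast
  rw [Complex.cos, mul_div_cancel₀ _ two_ne_zero, add_mul, ← Complex.exp_add, ← Complex.exp_add, add_comm]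
  congr 1
  · ring_nf
  · rw [← Complex.exp_zero]; ring_nf

lemma pt (m : ℕ) (t : ℝ) : ∑ S ∈ (Icc 1 m).powerset, Complex.exp ((2 * ((S.sum id : ℕ) : ℂ) * Complex.I) * t)
    = 2 ^ m * (P m t : ℂ) * Complex.exp (((∑ j ∈ Icc 1 m, j : ℕ) : ℂ) * Complex.I * t) := by
  have h1 : ∏ j ∈ Icc 1 m, (1 + Complex.exp ((2 * j * Complex.I) * t)) = 2 ^ m * (P m t : ℂ) * Complex.exp (((∑ j ∈ Icc 1 m, j : ℕ) : ℂ) * Complex.I * t) := by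
    simp_rw [term_eq, prod_mul_distrib, P]
    rw [← Complex.exp_sum]
    push_cast
    simp [sum_mul]
  rw [← h1, prod_one_add]
  refine sum_congr rfl fun S _ => ?_
  rw [← Complex.exp_sum]
  simp [sum_mul, mul_sum]

noncomputable def e (m : ℕ) : ℝ := ((∑ j ∈ Icc 1 m, j : ℕ) : ℝ) - 2 * ((m * (m+1) / 4 : ℕ) : ℝ)

lemma sum_id_two (m : ℕ) : (∑ j ∈ Icc 1 m, j) * 2 = m * (m+1) := by
  induction m with
  | zero => simp
  | succ n ih => rw [sum_Icc_succ_top (by omega), add_mul, ih]; ring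

lemma e_abs (m : ℕ) : |e m| ≤ 1 := by
  have h := sum_id_two m
  unfold e
  rw [← h]
  generalize (∑ j ∈ Icc 1 m, j) = a
  have h2 : 2 * (a * 2 / 4) ≤ a := by omega
  have h3 : a ≤ 2 * (a * 2 / 4) + 1 := by omega
  have h2' : (2:ℝ) * ((a * 2 / 4 : ℕ):ℝ) ≤ a := by exact_mod_cast h2
  have h3' : (a:ℝ) ≤ 2 * ((a * 2 / 4 : ℕ):ℝ) + 1 := by exact_mod_cast h3
  rw [abs_le]; constructor <;> linarith

lemma fourier (m : ℕ) : ((((Icc 1 m).powerset.filter fun S => S.sum id = m * (m + 1) / 4).card : ℕ) : ℂ) * Real.pi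
    = 2 ^ m * ∫ t in (-(Real.pi/2))..(Real.pi/2), (P m t : ℂ) * Complex.exp (e m * Complex.I * t) := by
  rw [← intervalIntegral.integral_const_mul]
  have : ∀ t : ℝ, 2 ^ m * ((P m t : ℂ) * Complex.exp (e m * Complex.I * t)) =
     ∑ S ∈ (Icc 1 m).powerset, Complex.exp ((2 * (((S.sum id : ℕ) - (m * (m+1)/4 : ℕ) : ℤ) : ℂ) * Complex.I) * t) := by
    intro t
    have h := congrArg (· * Complex.exp (-(2 * ((m * (m+1) / 4 : ℕ) : ℂ) * Complex.I * t))) (pt m t)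
    simp only [sum_mul, ← Complex.exp_add] at h
    rw [mul_assoc (2 ^ m * (P m t : ℂ)), ← Complex.exp_add, mul_assoc (2 ^ m)] at h
    convert h.symm using 3
    · unfold e; push_cast; ring_nf
    · rw [Int.cast_sub, Int.cast_natCast, Int.cast_natCast]; ring
  simp_rw [this]
  rw [intervalIntegral.integral_finsetSum]
  · simp_rw [int_exp]
    rw [card_filter, Nat.cast_sum, sum_mul]
    refine sum_congr rfl fun S _ => ?_
    simp only [sub_eq_zero, Nat.cast_inj]
    split_ifs <;> simp
  · intro S _
    apply Continuous.intervalIntegrable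
    fun_prop

lemma sin_sq_sum (m : ℕ) (t : ℝ) : 4 * Real.sin t * ∑ j ∈ Icc 1 m, Real.sin (j * t) ^ 2 = (2 * m + 1) * Real.sin t - Real.sin ((2 * m + 1) * t) := by
  induction m with
  | zero => simp
  | succ n ih =>
    rw [sum_Icc_succ_top (by omega), mul_add, ih]
    push_cast
    have h1 : (2 * (n:ℝ) + 1) * t = 2 * ((n+1) * t) - t := by ring
    have h2 : (2 * ((n:ℝ)+1) + 1) * t = 2 * ((n+1) * t) + t := by ring
    rw [h1, h2, Real.sin_sub, Real.sin_add, Real.cos_two_mul, Real.cos_sq']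
    ring

lemma sin_sq_lower (m : ℕ) (hm : 0 < m) (t : ℝ) (h1 : Real.pi / (2 * m) ≤ t) (h2 : t ≤ Real.pi / 2) :
    (m:ℝ) / 4 ≤ ∑ j ∈ Icc 1 m, Real.sin (j * t) ^ 2 := by
  have hm' : (0:ℝ) < m := by exact_mod_cast hm
  have hpi := Real.pi_pos
  have ht : 0 < t := lt_of_lt_of_le (by positivity) h1
  have hs : 1 / (m:ℝ) ≤ Real.sin t := by
    refine le_trans ?_ (Real.mul_le_sin ht.le h2)
    calc 1 / (m:ℝ) = 2 / Real.pi * (Real.pi / (2 * m)) := by field_simp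
      _ ≤ _ := by gcongr
  have hs0 : 0 < Real.sin t := lt_of_lt_of_le (by positivity) hs
  have h := sin_sq_sum m t
  have h3 : Real.sin ((2 * m + 1) * t) ≤ m * Real.sin t := by
    refine (Real.sin_le_one _).trans ?_
    rw [div_le_iff₀ hm'] at hs
    linarith
  have : 4 * Real.sin t * (m/4) ≤ 4 * Real.sin t * ∑ j ∈ Icc 1 m, Real.sin (j * t) ^ 2 := by
    rw [h]; nlinarith
  exact le_of_mul_le_mul_left this (by positivity)

lemma P_sq_le (m : ℕ) (t : ℝ) : P m t ^ 2 ≤ Real.exp (- ∑ j ∈ Icc 1 m, Real.sin (j * t) ^ 2) := by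
  unfold P
  rw [← prod_pow, ← sum_neg_distrib, Real.exp_sum]
  refine prod_le_prod (fun _ _ => sq_nonneg _) fun j _ => ?_
  rw [Real.cos_sq']
  have := Real.add_one_le_exp (-Real.sin (j * t) ^ 2)
  linarith

lemma P_far (m : ℕ) (hm : 0 < m) (t : ℝ) (h1 : Real.pi / (2 * m) ≤ t) (h2 : t ≤ Real.pi / 2) :
    |P m t| ≤ Real.exp (-(m/8)) := by
  apply abs_le_of_sq_le_sq _ (Real.exp_pos _).le
  rw [← Real.exp_nat_mul]
  refine (P_sq_le m t).trans (Real.exp_le_exp.2 ?_)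
  have := sin_sq_lower m hm t h1 h2
  push_cast; linarith

lemma cos_le (x : ℝ) (hx : |x| ≤ Real.pi / 2) : Real.cos x ≤ Real.exp (-(x^2/(1+x^2)/2)) := by
  have hpi := Real.pi_pos
  rw [abs_le] at hx
  have h := Real.cos_le_one_div_sqrt_sq_add_one (x := x) (by linarith) (by linarith)
  refine h.trans ?_
  apply le_of_sq_le_sq _ (Real.exp_pos _).le
  rw [← Real.exp_nat_mul, div_pow, Real.sq_sqrt (by positivity)]
  have := Real.add_one_le_exp (-(x^2/(1+x^2)))
  refine le_trans (le_of_eq ?_) (this.trans (le_of_eq ?_))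
  · field_simp; ring
  · congr 1; push_cast; ring

lemma cos_ge (x Y : ℝ) (hY : Y < 1) (hx : x^2/2 ≤ Y) : Real.exp (-(x^2/2/(1-Y))) ≤ Real.cos x := by
  refine le_trans ?_ (Real.one_sub_sq_div_two_le_cos)
  have hy0 : 0 ≤ x^2/2 := by positivity
  set y := x^2/2
  have h1 : 0 < 1 - y := by linarith
  have h2 : y/(1-y) ≤ y/(1-Y) := by
    apply div_le_div_of_nonneg_left <;> linarith
  have h3 := Real.add_one_le_exp (y/(1-y))
  have h4 : y/(1-y) + 1 = (1-y)⁻¹ := by field_simp; ring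
  rw [h4] at h3
  rw [Real.exp_neg]
  apply inv_le_of_inv_le₀ h1
  exact h3.trans (Real.exp_le_exp.2 h2)

lemma sum_sq (m : ℕ) : ∑ j ∈ Icc 1 m, (j:ℝ)^2 = m * (m+1) * (2*m+1) / 6 := by
  induction m with
  | zero => simp
  | succ n ih => rw [sum_Icc_succ_top (by omega), ih]; push_cast; ring

lemma P_upper (m : ℕ) (t Y : ℝ) (hY : Y ≤ Real.pi / 2) (h : m * |t| ≤ Y) :
    |P m t| ≤ Real.exp (-(t^2 * (m * (m+1) * (2*m+1) / 6) / (1 + Y^2) / 2)) := by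
  have hs : t^2 * (m * (m+1) * (2*m+1) / 6) / (1 + Y^2) / 2 = ∑ j ∈ Icc 1 m, (j * t)^2/(1+Y^2)/2 := by
    rw [← sum_sq, mul_sum, sum_div, sum_div]
    refine sum_congr rfl fun j _ => by ring
  rw [hs, ← sum_neg_distrib, Real.exp_sum, P, abs_prod]
  refine prod_le_prod (fun _ _ => abs_nonneg _) fun j hj => ?_
  have hjm : (j:ℝ) ≤ m := by exact_mod_cast (mem_Icc.1 hj).2
  have hx : |j * t| ≤ Y := by
    rw [abs_mul, Nat.abs_cast]
    exact le_trans (by gcongr) h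
  have hx2 : (j*t)^2 ≤ Y^2 := sq_le_sq' (abs_le.1 hx).1 (abs_le.1 hx).2
  have hx3 := abs_le.1 (hx.trans hY)
  rw [abs_of_nonneg (Real.cos_nonneg_of_neg_pi_div_two_le_of_le (by linarith) hx3.2)]
  refine (cos_le _ (hx.trans hY)).trans (Real.exp_le_exp.2 (neg_le_neg ?_))
  gcongr

lemma P_lower (m : ℕ) (t Y : ℝ) (hY : Y < 1) (h : (m * t)^2/2 ≤ Y) :
    Real.exp (-(t^2 * (m * (m+1) * (2*m+1) / 6) / 2 / (1 - Y))) ≤ P m t := by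
  have hs : t^2 * (m * (m+1) * (2*m+1) / 6) / 2 / (1 - Y) = ∑ j ∈ Icc 1 m, (j * t)^2/2/(1-Y) := by
    rw [← sum_sq, mul_sum, sum_div, sum_div]
    refine sum_congr rfl fun j _ => by ring
  rw [hs, ← sum_neg_distrib, Real.exp_sum, P]
  refine prod_le_prod (fun _ _ => (Real.exp_pos _).le) fun j hj => ?_
  have hjm : (j:ℝ) ≤ m := by exact_mod_cast (mem_Icc.1 hj).2
  apply cos_ge _ _ hY
  refine le_trans ?_ h
  rw [mul_pow, mul_pow]
  gcongr


noncomputable def c (m : ℕ) : ℝ := (m:ℝ) ^ ((3:ℝ)/2)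

lemma c_sq (m : ℕ) : c m ^ 2 = (m:ℝ)^3 := by
  unfold c
  rw [← Real.rpow_natCast, ← Real.rpow_mul (by positivity), ← Real.rpow_natCast]
  norm_num

lemma c_pos (m : ℕ) (hm : 0 < m) : 0 < c m := by
  have : (0:ℝ) < m := by exact_mod_cast hm
  unfold c; positivity

lemma P_neg (m : ℕ) (t : ℝ) : P m (-t) = P m t := by
  simp [P]

lemma P_abs (m : ℕ) (t : ℝ) : P m |t| = P m t := by
  rcases abs_choice t with h | h <;> rw [h]
  exact P_neg m t

lemma P_bound (m : ℕ) (hm : 0 < m) (s : ℝ) (hs : |s| ≤ Real.pi / 2 * c m) :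
    |P m (s / c m)| ≤ 15360 * (1 + s^2)⁻¹ := by
  have hm' : (1:ℝ) ≤ m := by exact_mod_cast hm
  have hc := c_pos m hm
  have hc2 := c_sq m
  have hpi := Real.pi_pos
  have hpi4 := Real.pi_le_four
  have hpi2 : Real.pi ^ 2 ≤ 12 := by nlinarith [Real.pi_lt_d2]
  have ht2 : (s / c m)^2 * (m:ℝ)^3 = s^2 := by rw [← hc2]; field_simp
  rw [← div_eq_mul_inv, le_div_iff₀ (by positivity)]
  rcases le_total |s / c m| (Real.pi / (2 * m)) with h | h
  · have h1 := P_upper m (s / c m) (Real.pi/2) le_rfl (by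
      rw [le_div_iff₀ (by positivity)] at h; linarith)
    have h2 : s^2/24 ≤ (s / c m)^2 * (m * (m+1) * (2*m+1) / 6) / (1 + (Real.pi/2)^2) / 2 := by
      have : s^2/3 ≤ (s / c m)^2 * (m * (m+1) * (2*m+1) / 6) := by
        rw [← ht2, mul_div_assoc]
        apply mul_le_mul_of_nonneg_left _ (sq_nonneg _)
        nlinarith [sq_nonneg (m:ℝ)]
      rw [div_div, le_div_iff₀ (by positivity)]
      nlinarith [sq_nonneg s]
    have h3 : |P m (s / c m)| ≤ Real.exp (-(s^2/24)) := h1.trans (Real.exp_le_exp.2 (neg_le_neg h2))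
    have h4 := Real.add_one_le_exp (s^2/24)
    have h5 : Real.exp (-(s^2/24)) * Real.exp (s^2/24) = 1 := by rw [← Real.exp_add]; simp
    have h6 : |P m (s / c m)| * (1 + s^2/24) ≤ 1 := by
      rw [← h5]
      have := abs_nonneg (P m (s / c m))
      gcongr; linarith
    nlinarith [abs_nonneg (P m (s / c m)), sq_nonneg s]
  · have h1 := P_far m hm |s / c m| h (by
      rw [abs_div, abs_of_pos hc, div_le_iff₀ hc]; exact hs)
    rw [P_abs] at h1
    have h4 := Real.pow_div_factorial_le_exp ((m:ℝ)/8) (by positivity) 3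
    have h5 : Real.exp (-((m:ℝ)/8)) * Real.exp ((m:ℝ)/8) = 1 := by rw [← Real.exp_add]; simp
    have h7 : s^2 ≤ 4 * (m:ℝ)^3 := by
      rw [← hc2, ← sq_abs s]
      calc |s|^2 ≤ (Real.pi / 2 * c m)^2 := by gcongr
        _ = (Real.pi^2 / 4) * c m ^2 := by ring
        _ ≤ _ := by gcongr; linarith
    have h8 : (1:ℝ) ≤ (m:ℝ)^3 := one_le_pow₀ hm'
    have h9 : 1 + s^2 ≤ 15360 * Real.exp ((m:ℝ)/8) := by
      norm_num [Nat.factorial] at h4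
      nlinarith
    calc |P m (s / c m)| * (1 + s^2) ≤ Real.exp (-((m:ℝ)/8)) * (15360 * Real.exp ((m:ℝ)/8)) := by gcongr
      _ = 15360 := by linarith

lemma P_lim (s : ℝ) : Filter.Tendsto (fun m : ℕ => P m (s / c m)) Filter.atTop (nhds (Real.exp (-(1/6) * s^2))) := by
  have hu : Filter.Tendsto (fun m : ℕ => ((m:ℝ))⁻¹) Filter.atTop (nhds 0) := tendsto_inv_atTop_nhds_zero_nat
  have key : ∀ m : ℕ, 0 < m → (s / c m)^2 * (m * (m+1) * (2*m+1) / 6) = s^2 * ((1 + (m:ℝ)⁻¹) * (2 + (m:ℝ)⁻¹) / 6) := by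
    intro m hm
    have hm' : (0:ℝ) < m := by exact_mod_cast hm
    rw [div_pow, c_sq]; field_simp
  have key2 : ∀ m : ℕ, 0 < m → (m * (s / c m))^2 = s^2 * (m:ℝ)⁻¹ := by
    intro m hm
    have hm' : (0:ℝ) < m := by exact_mod_cast hm
    rw [mul_pow, div_pow, c_sq]; field_simp
  have hG : Filter.Tendsto (fun u : ℝ => Real.exp (-(s^2 * ((1 + u) * (2 + u) / 6) / (1 + s^2 * u) / 2))) (nhds 0) (nhds (Real.exp (-(1/6) * s^2))) := by
    have : ContinuousAt (fun u : ℝ => Real.exp (-(s^2 * ((1 + u) * (2 + u) / 6) / (1 + s^2 * u) / 2))) 0 := by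
      refine ContinuousAt.rexp (ContinuousAt.neg (ContinuousAt.div_const (ContinuousAt.div (by fun_prop) (by fun_prop) (by simp)) _))
    convert this.tendsto using 2
    norm_num; ring
  have hH : Filter.Tendsto (fun u : ℝ => Real.exp (-(s^2 * ((1 + u) * (2 + u) / 6) / 2 / (1 - s^2 * u / 2)))) (nhds 0) (nhds (Real.exp (-(1/6) * s^2))) := by
    have : ContinuousAt (fun u : ℝ => Real.exp (-(s^2 * ((1 + u) * (2 + u) / 6) / 2 / (1 - s^2 * u / 2)))) 0 := by
      refine ContinuousAt.rexp (ContinuousAt.neg (ContinuousAt.div (by fun_prop) (by fun_prop) (by simp)))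
    convert this.tendsto using 2
    norm_num; ring
  have hsm : Filter.Tendsto (fun m : ℕ => s^2 * (m:ℝ)⁻¹) Filter.atTop (nhds 0) := by
    simpa using hu.const_mul (s^2)
  refine tendsto_of_tendsto_of_tendsto_of_le_of_le' (hH.comp hu) (hG.comp hu) ?_ ?_
  · filter_upwards [Filter.eventually_gt_atTop 0, hsm.eventually_lt_const (zero_lt_one)] with m hm h1
    have := P_lower m (s / c m) (s^2 * (m:ℝ)⁻¹/2) (by linarith) (by rw [key2 m hm])
    rw [key m hm] at this
    exact this
  · filter_upwards [Filter.eventually_gt_atTop 0, hsm.eventually_lt_const (zero_lt_one)] with m hm h1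
    have h2 : (m * |s / c m|)^2 = s^2 * (m:ℝ)⁻¹ := by rw [mul_pow, sq_abs, ← mul_pow, key2 m hm]
    have := P_upper m (s / c m) (m * |s / c m|) (by
      have : m * |s / c m| ≤ 1 := by
        apply le_of_sq_le_sq _ zero_le_one
        rw [h2]; linarith
      linarith [Real.pi_gt_three]) le_rfl
    rw [h2, key m hm] at this
    exact (le_abs_self _).trans this

noncomputable def F (m : ℕ) : ℝ → ℂ := (Set.Ioc (-(Real.pi/2 * c m)) (Real.pi/2 * c m)).indicator
  fun s => (P m (s / c m) : ℂ) * Complex.exp (e m * Complex.I * ((s / c m : ℝ) : ℂ))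

lemma F_int (m : ℕ) (hm : 0 < m) : ((((((Icc 1 m).powerset.filter fun S => S.sum id = m * (m + 1) / 4).card : ℝ) *
          (m : ℝ) ^ ((3 : ℝ) / 2)) / 2 ^ m : ℝ) : ℂ) = (∫ s, F m s) / Real.pi := by
  have hc := c_pos m hm
  have h := fourier m
  have hpi : (Real.pi : ℂ) ≠ 0 := by exact_mod_cast Real.pi_ne_zero
  unfold F
  rw [MeasureTheory.integral_indicator measurableSet_Ioc, ← intervalIntegral.integral_of_le (by
    have := Real.pi_pos
    have : 0 < Real.pi/2 * c m := by positivity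
    linarith),
    intervalIntegral.integral_comp_div (fun t : ℝ => (P m t : ℂ) * Complex.exp (e m * Complex.I * (t : ℂ))) hc.ne', neg_div,
    mul_div_cancel_right₀ _ hc.ne', eq_div_iff hpi]
  push_cast
  change _ * (((m:ℝ) ^ ((3 : ℝ) / 2) : ℝ) : ℂ) / 2 ^ m * _ = _
  change _ * ((c m : ℝ) : ℂ) / 2 ^ m * _ = _
  rw [mul_div_assoc, mul_right_comm, h, Complex.real_smul]
  field_simp

lemma c_tendsto : Filter.Tendsto c Filter.atTop Filter.atTop :=
  (tendsto_rpow_atTop (by norm_num)).comp tendsto_natCast_atTop_atTop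

lemma F_tendsto : Filter.Tendsto (fun m => ∫ s, F m s) Filter.atTop (nhds (∫ s : ℝ, ((Real.exp (-(1/6) * s^2) : ℝ) : ℂ))) := by
  refine MeasureTheory.tendsto_integral_of_dominated_convergence (fun s => 15360 * (1 + s^2)⁻¹) ?_ (integrable_inv_one_add_sq.const_mul _) ?_ ?_
  · intro m
    refine (Continuous.aestronglyMeasurable ?_).indicator measurableSet_Ioc
    unfold P
    fun_prop
  · intro m
    refine Filter.Eventually.of_forall fun s => ?_
    unfold F
    by_cases hs : s ∈ Set.Ioc (-(Real.pi/2 * c m)) (Real.pi/2 * c m)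
    · rw [Set.indicator_of_mem hs, norm_mul]
      have h1 : ‖Complex.exp (e m * Complex.I * ((s / c m : ℝ) : ℂ))‖ = 1 := by
        rw [← Complex.norm_exp_ofReal_mul_I (e m * (s / c m))]
        push_cast; ring_nf
      rw [h1, mul_one, Complex.norm_real, Real.norm_eq_abs]
      have hm : 0 < m := by
        rcases Nat.eq_zero_or_pos m with h | h
        · subst h
          simp [c] at hs
        · exact h
      exact P_bound m hm s (abs_le.2 ⟨hs.1.le, hs.2⟩)
    · rw [Set.indicator_of_notMem hs, norm_zero]; positivity
  · refine Filter.Eventually.of_forall fun s => ?_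
    have hdiv : Filter.Tendsto (fun m => e m * (s / c m)) Filter.atTop (nhds 0) := by
      have h0 : Filter.Tendsto (fun m => |s / c m|) Filter.atTop (nhds 0) := by
        simpa using (c_tendsto.const_div_atTop s).abs
      refine squeeze_zero_norm (fun m => ?_) h0
      rw [Real.norm_eq_abs, abs_mul]
      exact mul_le_of_le_one_left (abs_nonneg _) (e_abs m)
    have hexp : Filter.Tendsto (fun m => Complex.exp (e m * Complex.I * ((s / c m : ℝ) : ℂ))) Filter.atTop (nhds 1) := by
      have hcont : Continuous fun x : ℝ => Complex.exp (x * Complex.I) := by fun_prop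
      have := (hcont.tendsto 0).comp hdiv
      simp only [Complex.ofReal_zero, zero_mul, Complex.exp_zero] at this
      refine this.congr fun m => ?_
      simp only [Function.comp]
      push_cast; ring_nf
    have hP := (Complex.continuous_ofReal.tendsto _).comp (P_lim s)
    have := hP.mul hexp
    rw [mul_one] at this
    refine this.congr' ?_
    have hR : Filter.Tendsto (fun m => Real.pi/2 * c m) Filter.atTop Filter.atTop :=
      c_tendsto.const_mul_atTop (by have := Real.pi_pos; positivity)
    filter_upwards [hR.eventually_gt_atTop |s|] with m hm
    unfold F
    rw [Set.indicator_of_mem]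
    · rfl
    · have := abs_lt.1 hm
      exact ⟨this.1, this.2.le⟩

end MidRank




/-- asymptotics of the middle rank. If `A(m)` is the number of
subsets of `{1,…,m}` with element sum `⌊m(m+1)/4⌋`, then
`A(m) · m^{3/2} / 2^m → √(6/π)` as `m → ∞`. -/
theorem middle_rank_asymptotics :
    Filter.Tendsto
      (fun m : ℕ =>
        ((((Finset.Icc 1 m).powerset.filter
            fun S => S.sum id = m * (m + 1) / 4).card : ℝ) *
          (m : ℝ) ^ ((3 : ℝ) / 2)) / 2 ^ m)
      Filter.atTop (nhds (Real.sqrt (6 / Real.pi))) := by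
  have h := MidRank.F_tendsto.div_const (Real.pi : ℂ)
  rw [integral_complex_ofReal, integral_gaussian, ← Complex.ofReal_div] at h
  have hv : √(Real.pi / (1 / 6)) / Real.pi = √(6 / Real.pi) := by
    have hpi := Real.pi_pos
    rw [div_eq_iff hpi.ne']
    nth_rewrite 3 [← Real.sqrt_sq hpi.le]
    rw [← Real.sqrt_mul (by positivity)]
    congr 1
    field_simp
  rw [hv] at h
  have h2 := (Complex.continuous_re.tendsto _).comp h
  rw [Complex.ofReal_re] at h2
  refine h2.congr' ?_
  filter_upwards [Filter.eventually_gt_atTop 0] with m hm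
  simp only [Function.comp]
  rw [← MidRank.F_int m hm, Complex.ofReal_re]
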